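/- Let μ ∈ P_c^{∨,+} := {μ ∈ P∨ : 0 ≤ ⟨μ,α⟩ ≤ c for all α ∈ R₀⁺} and let ξ_μ be the unique global minimum of 𝒱_μ. Then ξ_μ lies in the open alcove 2πA∨ := {ξ ∈ V : 0 < ⟨ξ,α⟩ < 2π for all α ∈ R₀⁺}, and the moment-gap inequalities hold: for every α ∈ R₀⁺, 2π⟨ρ∨+μ,α⟩/(c+κ₋) ≤ ⟨ξ_μ,α⟩ ≤ 2π⟨ρ∨+μ,α⟩/(c+κ₊), where κ_± := (2/n) ∑_{α∈R₀⁺} (1−t_α²)/(1 ± |t_α|)². -/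

import Mathlib

open scoped RealInnerProductSpace BigOperators Classical

noncomputable section

/-- Alternating composition `A ∘ B ∘ A ∘ ⋯` with `m` factors (starting with `A`). -/
def altComp {α : Type*} (A B : α → α) : ℕ → (α → α)
  | 0 => id
  | m + 1 => A ∘ altComp B A m

/-- The sign of a real number, as an integer (with `sgnZ 0 = 0`). -/
def sgnZ (x : ℝ) : ℤ := if 0 < x then 1 else if x < 0 then -1 else 0

/-- The function `v(x) = (1-t²)∫₀ˣ dy/(1-2t cos y+t²)`. -/
def mvfun (t x : ℝ) : ℝ :=
  (1 - t ^ 2) * ∫ y in (0:ℝ)..x, 1 / (1 - 2 * t * Real.cos y + t ^ 2)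

section AffineOps

variable {V : Type*} [NormedAddCommGroup V] [InnerProductSpace ℝ V]

/-- The coroot `α∨ = 2α/⟨α,α⟩`. -/
def coroot (α : V) : V := (2 / ⟪α, α⟫) • α

/-- The affine root `a = α∨ + r c` (encoded as the pair `(α, r)`), as an affine
function on `V`. -/
def aval (c : ℝ) (a : V × ℤ) (x : V) : ℝ := ⟪x, coroot a.1⟫ + a.2 * c

/-- The affine reflection `s_a(x) = x - a(x) α` attached to `a = α∨ + r c`. -/
def sAff (c : ℝ) (a : V × ℤ) (x : V) : V := x - aval c a x • a.1

/-- `w` maps the affine root `a` to the affine root `b`, i.e. `(wa)(x) = a(w⁻¹x) = b(x)`. -/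
def mapsRoot (c : ℝ) (w : Equiv.Perm V) (a b : V × ℤ) : Prop :=
  ∀ x : V, aval c a (w⁻¹ x) = aval c b x

/-- The linear part `w′` of an affine transformation `w`. -/
def linPart (w : Equiv.Perm V) (x : V) : V := w x - w 0

variable {R : Type*} [Field R]

/-- The difference-reflection operator `T̂_a`. -/
def hatT (c : ℝ) (τ : V × ℤ → R) (a : V × ℤ) (f : V → R) (x : V) : R :=
  if 0 < aval c a x then τ a * f (sAff c a x)
  else if aval c a x = 0 then τ a * f x
  else (τ a)⁻¹ * f (sAff c a x) + (τ a - (τ a)⁻¹) * f x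

/-- The discrete integral operator `J_a`. -/
def Jop (c : ℝ) (a : V × ℤ) (f : V → R) (x : V) : R :=
  if 0 < aval c a x then
    - ∑ k ∈ Finset.Icc (1 : ℤ) ⌊aval c a x⌋, f (x - k • a.1)
  else if aval c a x = 0 then 0
  else ∑ k ∈ Finset.Ico (0 : ℤ) (-⌊aval c a x⌋), f (x + k • a.1)

/-- The integral-reflection operator `I_a = τ_a s_a + (τ_a - τ_a⁻¹) J_a`. -/
def Iop (c : ℝ) (τ : V × ℤ → R) (a : V × ℤ) (f : V → R) (x : V) : R :=
  τ a * f (sAff c a x) + (τ a - (τ a)⁻¹) * Jop c a f x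

end AffineOps

/-- An irreducible reduced crystallographic root system spanning `V`, together with a
choice of positive roots, simple roots, and the highest short root. -/
structure RootSystemData (V : Type*) [NormedAddCommGroup V] [InnerProductSpace ℝ V] :
    Type _ where
  n : ℕ
  n_pos : 1 ≤ n
  rank_eq : Module.finrank ℝ V = n
  R0 : Finset V
  ne_zero : ∀ α ∈ R0, α ≠ (0 : V)
  span_top : Submodule.span ℝ (R0 : Set V) = ⊤
  reduced : ∀ α ∈ R0, ∀ t : ℝ, t • α ∈ R0 → t = 1 ∨ t = -1
  crystallographic : ∀ α ∈ R0, ∀ β ∈ R0, ∃ k : ℤ, ⟪β, coroot α⟫ = (k : ℝ)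
  reflect_mem : ∀ α ∈ R0, ∀ β ∈ R0, β - ⟪β, coroot α⟫ • α ∈ R0
  irreducible : ∀ S : Finset V, S ⊆ R0 →
      (∀ a ∈ S, ∀ b ∈ R0, b ∉ S → ⟪a, b⟫ = 0) → S = ∅ ∨ S = R0
  pos : Finset V
  pos_subset : pos ⊆ R0
  pos_or_neg : ∀ α ∈ R0, α ∈ pos ∨ -α ∈ pos
  pos_not_both : ∀ α ∈ pos, -α ∉ pos
  pos_add : ∀ α ∈ pos, ∀ β ∈ pos, α + β ∈ R0 → α + β ∈ pos
  simpleRoot : Fin n → V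
  simpleRoot_mem : ∀ j, simpleRoot j ∈ pos
  pos_natCombo : ∀ α ∈ pos, ∃ k : Fin n → ℕ, α = ∑ j, (k j : ℝ) • simpleRoot j
  hshort : V
  hshort_mem : hshort ∈ pos
  hshort_short : ∀ α ∈ R0, ‖hshort‖ ≤ ‖α‖
  hshort_highest : ∀ α ∈ R0, ‖α‖ = ‖hshort‖ →
      ∃ k : Fin n → ℕ, hshort - α = ∑ j, (k j : ℝ) • simpleRoot j

namespace RootSystemData

variable {V : Type*} [NormedAddCommGroup V] [InnerProductSpace ℝ V]
variable (D : RootSystemData V)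

/-- The weight lattice `P`. -/
def weightLattice : Set V :=
  {x : V | ∀ α ∈ D.R0, ∃ k : ℤ, ⟪x, coroot α⟫ = (k : ℝ)}

/-- The root lattice `Q`. -/
def rootLattice : Set V := (Submodule.span ℤ (D.R0 : Set V) : Set V)

/-- The coweight lattice `P∨`. -/
def coweightLattice : Set V :=
  {x : V | ∀ α ∈ D.R0, ∃ k : ℤ, ⟪x, α⟫ = (k : ℝ)}

/-- The dominant cone. -/
def dominant : Set V := {x : V | ∀ α ∈ D.pos, 0 ≤ ⟪x, coroot α⟫}

/-- `ω` is a minuscule (dominant) weight. -/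
def IsMinuscule (ω : V) : Prop :=
  ω ∈ D.weightLattice ∧ ω ∈ D.dominant ∧ ω ≠ 0 ∧
    ∀ α ∈ D.pos, ⟪ω, coroot α⟫ ≤ 1

/-- `ω` is the quasi-minuscule weight, i.e. the highest short root. -/
def IsQuasiMinuscule (ω : V) : Prop := ω = D.hshort

/-- The saturated set `P_ϑ` containing the (quasi-)minuscule weights. -/
def Ptheta : Set V :=
  {ν : V | ν ∈ D.weightLattice ∧ ∀ α ∈ D.R0, α ≠ ν → |⟪ν, coroot α⟫| ≤ 1}

/-- Half sum of the positive roots. -/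
def rhoHalf : V := (2⁻¹ : ℝ) • ∑ α ∈ D.pos, α

/-- Half sum of the positive coroots. -/
def rhoVee : V := (2⁻¹ : ℝ) • ∑ α ∈ D.pos, coroot α

/-- `(α, r)` encodes an affine root. -/
def IsAffRoot (a : V × ℤ) : Prop := a.1 ∈ D.R0

/-- `(α, r)` encodes a positive affine root. -/
def IsAffPos (a : V × ℤ) : Prop :=
  a.1 ∈ D.R0 ∧ (1 ≤ a.2 ∨ (a.2 = 0 ∧ a.1 ∈ D.pos))

/-- `(α, r)` encodes a negative affine root. -/
def IsAffNeg (a : V × ℤ) : Prop := D.IsAffPos (-a.1, -a.2)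

/-- The simple affine roots `a₀ = -ϑ∨ + c`, `a_j = α_j∨`. -/
def aSimple (j : Fin (D.n + 1)) : V × ℤ :=
  Fin.cons (α := fun _ => V × ℤ) (-D.hshort, (1 : ℤ))
    (fun i => (D.simpleRoot i, (0 : ℤ))) j

/-- The reflections generating the finite Weyl group `W₀`. -/
def W0Gens : Set (Equiv.Perm V) :=
  {e | ∃ α ∈ D.R0, ∀ x, e x = x - ⟪x, coroot α⟫ • α}

/-- The finite Weyl group `W₀`. -/
def W0 : Subgroup (Equiv.Perm V) := Subgroup.closure D.W0Gens

variable (c : ℝ)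

/-- The affine reflections generating the affine Weyl group `W_R`. -/
def AffGens : Set (Equiv.Perm V) :=
  {e | ∃ a : V × ℤ, D.IsAffRoot a ∧ ∀ x, e x = sAff c a x}

/-- The affine Weyl group `W_R`. -/
def WR : Subgroup (Equiv.Perm V) := Subgroup.closure (D.AffGens c)

/-- The translations `t_{cλ}`, `λ ∈ P`. -/
def TransGens : Set (Equiv.Perm V) :=
  {e | ∃ lam ∈ D.weightLattice, ∀ x : V, e x = x + c • lam}

/-- The extended affine Weyl group `W = W₀ ⋉ t(cP)`. -/
def Wext : Subgroup (Equiv.Perm V) :=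
  Subgroup.closure (D.AffGens c ∪ D.TransGens c)

/-- The set `R(w) = R⁺ ∩ w⁻¹(R⁻)`. -/
def RW (w : Equiv.Perm V) : Set (V × ℤ) :=
  {a | D.IsAffPos a ∧ ∃ b : V × ℤ, D.IsAffNeg b ∧ mapsRoot c w a b}

/-- The length `ℓ(w) = #R(w)`. -/
def len (w : Equiv.Perm V) : ℕ := (D.RW c w).ncard

/-- The closed fundamental alcove `A_c`. -/
def alcove : Set V := {x | ∀ a : V × ℤ, D.IsAffPos a → 0 ≤ aval c a x}

/-- `wmin x` is the unique shortest element of the affine Weyl group mapping `x` into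
the fundamental alcove. -/
def IsWmin (wmin : V → Equiv.Perm V) : Prop :=
  ∀ x : V, wmin x ∈ D.WR c ∧ (wmin x) x ∈ D.alcove c ∧
    ∀ w ∈ D.WR c, w x ∈ D.alcove c → D.len c (wmin x) < D.len c w ∨ w = wmin x

/-- One step in the Bruhat order: `w < w s_a` whenever `ℓ(w) < ℓ(w s_a)`. -/
def bruhatStep (w w' : Equiv.Perm V) : Prop :=
  ∃ a : V × ℤ, D.IsAffPos a ∧ ∃ e : Equiv.Perm V,
    (∀ x, e x = sAff c a x) ∧ w' = w * e ∧ D.len c w < D.len c w'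

/-- The Bruhat order on the affine Weyl group. -/
def bruhatLE (w w' : Equiv.Perm V) : Prop :=
  Relation.ReflTransGen (D.bruhatStep c) w w'

/-- The partial order on `V`: `x ≤ y` iff `x₊ = y₊` and `w_x ≤ w_y` (Bruhat). -/
def vle (wmin : V → Equiv.Perm V) (x y : V) : Prop :=
  (wmin x) x = (wmin y) y ∧ D.bruhatLE c (wmin x) (wmin y)

/-- The interval `[x, y]` for the order `vle`. -/
def vInterval (wmin : V → Equiv.Perm V) (x y : V) : Set V :=
  {z : V | D.vle c wmin x z ∧ D.vle c wmin z y}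

/-- The partial order `⪯` on the weight lattice:
`μ ⪯ λ` iff `λ - μ ∈ Q` and `Conv [μ₊, μ] ⊆ Conv [λ₊, λ]`. -/
def pleq (wmin : V → Equiv.Perm V) (μ lam : V) : Prop :=
  lam - μ ∈ D.rootLattice ∧
    convexHull ℝ (D.vInterval c wmin ((wmin μ) μ) μ)
      ⊆ convexHull ℝ (D.vInterval c wmin ((wmin lam) lam) lam)

section Ops

variable {R : Type*} [Field R]

/-- `τ` is a multiplicity function: nonvanishing on affine roots, and invariant
under the (extended affine) Weyl group action on the affine roots. -/
def IsMultiplicity (τ : V × ℤ → R) : Prop :=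
  (∀ a : V × ℤ, D.IsAffRoot a → τ a ≠ 0) ∧
    ∀ w ∈ D.Wext c, ∀ a b : V × ℤ, D.IsAffRoot a → D.IsAffRoot b →
      mapsRoot c w a b → τ a = τ b

/-- `τ_w = ∏_{a ∈ R(w)} τ_a`. -/
def tauw (τ : V × ℤ → R) (w : Equiv.Perm V) : R := ∏ᶠ a ∈ D.RW c w, τ a

/-- `τ₀`, the multiplicity of the affine simple root `a₀`. -/
def tauZero (τ : V × ℤ → R) : R := τ (-D.hshort, (1 : ℤ))

/-- The operator `I_{j₁} ∘ ⋯ ∘ I_{jℓ}` attached to a word in the simple reflections. -/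
def wordOp (τ : V × ℤ → R) (l : List (Fin (D.n + 1))) : (V → R) → V → R :=
  (l.map fun j => Iop c τ (D.aSimple j)).foldr (· ∘ ·) id

/-- `l` is a reduced word for `w`, i.e. `w = s_{j₁} ∘ ⋯ ∘ s_{jℓ}` with `ℓ = ℓ(w)`. -/
def IsReducedWord (w : Equiv.Perm V) (l : List (Fin (D.n + 1))) : Prop :=
  l.length = D.len c w ∧
    ∀ x : V, w x = ((l.map fun j => sAff c (D.aSimple j)).foldr (· ∘ ·) id) x

/-- `e∨_τ(η) = ∏_{α ∈ R₀⁺} τ_{α∨}^{⟨η,α∨⟩}`. -/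
def etau (τ : V × ℤ → R) (η : V) : R :=
  ∏ α ∈ D.pos, τ (α, (0 : ℤ)) ^ ⌊⟪η, coroot α⟫⌋

/-- `h∨_τ = τ₀² e∨_τ(ϑ)`. -/
def hvee (τ : V × ℤ → R) : R := D.tauZero τ ^ 2 * D.etau τ D.hshort

/-- `θ(μ) = #{b ∈ R(w_μ) : b(μ) = -2}`. -/
def theta (wmin : V → Equiv.Perm V) (μ : V) : ℕ :=
  {b : V × ℤ | b ∈ D.RW c (wmin μ) ∧ aval c b μ = -2}.ncard

/-- The coefficient `c_{λ,η} = θ(λ-η) e∨_τ(η) (h∨_τ)^{-sign⟨λ,η∨⟩}`. -/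
def ccoef (τ : V × ℤ → R) (wmin : V → Equiv.Perm V) (lam η : V) : R :=
  (D.theta c wmin (lam - η) : R) * D.etau τ η *
    D.hvee τ ^ (-sgnZ ⟪lam, coroot η⟫)

/-- The coefficient `a_{λ,ν} = τ_{w_{w_λ(λ-ν)}} τ_{w_{w_λ(λ-ν)} w_λ} τ_{w_λ}⁻¹`. -/
def acoef (τ : V × ℤ → R) (wmin : V → Equiv.Perm V) (lam ν : V) : R :=
  D.tauw c τ (wmin ((wmin lam) (lam - ν))) *
    D.tauw c τ (wmin ((wmin lam) (lam - ν)) * wmin lam) *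
    (D.tauw c τ (wmin lam))⁻¹

/-- The coefficient `b_{λ,ν}`. -/
def bcoef (τ : V × ℤ → R) (wmin : V → Equiv.Perm V) (lam ν : V) : R :=
  if (wmin (lam - ν)) (lam - ν) = (wmin lam) lam then
    D.tauw c τ (wmin ((wmin lam) (lam - ν))) ^ 2 *
      (if D.IsAffNeg (ν, ⌊(1 - ⟪lam, coroot ν⟫) / c⌋) then 1 else 0)
  else D.ccoef c τ wmin ((wmin lam) lam) (linPart (wmin lam) ν)

/-- The intertwining operator `(𝒥f)(λ) = τ_{w_λ}⁻¹ (I_{w_λ} f)(λ₊)`, where `Iw` assigns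
to each `w_λ` the composite of integral-reflection operators along a reduced word. -/
def Jcal (τ : V × ℤ → R) (wmin : V → Equiv.Perm V)
    (Iw : Equiv.Perm V → (V → R) → V → R) (f : V → R) (x : V) : R :=
  (D.tauw c τ (wmin x))⁻¹ * Iw (wmin x) f ((wmin x) x)

end Ops

/-- The Yang–Yang type Morse function `𝒱_μ`. -/
def morse (t : V → ℝ) (μ ξ : V) : ℝ :=
  (c / 2) * ⟪ξ, ξ⟫ - 2 * Real.pi * ⟪D.rhoVee + μ, ξ⟫ +
    ∑ α ∈ D.pos, (2 / ⟪α, α⟫) * ∫ x in (0:ℝ)..(⟪ξ, α⟫), mvfun (t α) x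

/-- The critical equation `cξ + ∑_{α>0} v_α(⟨ξ,α⟩) α∨ = 2π(ρ∨+μ)`. -/
def criticalEq (t : V → ℝ) (μ ξ : V) : Prop :=
  c • ξ + ∑ α ∈ D.pos, mvfun (t α) ⟪ξ, α⟫ • coroot α
    = (2 * Real.pi) • (D.rhoVee + μ)

/-- The Hessian bilinear form `H_{η,ζ}(ξ)`. -/
def hessForm (t : V → ℝ) (ξ η ζ : V) : ℝ :=
  c * ⟪η, ζ⟫ + ∑ α ∈ D.R0,
    (1 - t α ^ 2) * ⟪η, α⟫ * ⟪ζ, α⟫ /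
      (⟪α, α⟫ * (1 - 2 * t α * Real.cos ⟪ξ, α⟫ + t α ^ 2))

/-- `κ_± = (2/n) ∑_{α>0} (1-t_α²)/(1 ± |t_α|)²`; here `s = ±1`. -/
def kappaPM (t : V → ℝ) (s : ℝ) : ℝ :=
  (2 / (D.n : ℝ)) * ∑ α ∈ D.pos, (1 - t α ^ 2) / (1 + s * |t α|) ^ 2

end RootSystemData

/-!
The argument applies to any solution `ξ` of the critical equation, paired with a root `β`. If
`F` is an odd function on the roots, then averaging over the reflection `s_β` gives
`⟨∑_{α > 0} F(α) α∨, β⟩ = ¼ ∑_α (F(α) - F(s_β α)) ⟨α∨, β⟩`.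

For `F(α) = v_α(⟨ξ,α⟩)` each difference is `v_α'` at an intermediate point times
`⟨ξ,β⟩⟨α,β∨⟩`, and Schur's lemma for the reflection representation evaluates the sum
`¼ ∑_α k_α ⟨α,β∨⟩⟨α∨,β⟩` for constant-on-orbits `k`; bounding `v_α'` by its extreme values gives
`(c + K)⟨ξ,β⟩ = 2π⟨ρ∨ + μ,β⟩` with `κ₊ ≤ K ≤ κ₋`.

For the upper wall of the alcove, let `β` maximise `⟨ξ,·⟩` and suppose `⟨ξ,β⟩ ≥ 2π`. The function
`F(α) = v_α(⟨ξ,α⟩) ∓ π` (for `α` positive or negative) does not increase under `s_β` when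
`⟨α,β⟩ > 0`, because `v_α` is monotone and `v_α(x - 2π) = v_α(x) - 2π`. Hence
`2π⟨μ,β⟩ - c⟨ξ,β⟩ > 0`, which contradicts `⟨μ,β⟩ ≤ c`.
-/

open Real Set

section Calculus

lemma exists_deriv_eq_dslope {f : ℝ → ℝ} (hf : Differentiable ℝ f) (a b : ℝ) :
    ∃ x, deriv f x = dslope f a b := by
  rcases lt_trichotomy a b with hab | rfl | hba
  · obtain ⟨x, -, hx⟩ :=
      exists_deriv_eq_slope f hab hf.continuous.continuousOn hf.differentiableOn
    exact ⟨x, by rw [hx, dslope_of_ne f hab.ne', slope_def_field]⟩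
  · exact ⟨a, (dslope_same f a).symm⟩
  · obtain ⟨x, -, hx⟩ :=
      exists_deriv_eq_slope f hba hf.continuous.continuousOn hf.differentiableOn
    exact ⟨x, by rw [hx, dslope_of_ne f hba.ne, slope_comm, slope_def_field]⟩

/-- The Poisson kernel of radius `t` of the unit disc; it is the derivative of `mvfun t`. -/
def poissonDensity (t x : ℝ) : ℝ := (1 - t ^ 2) / (1 - 2 * t * cos x + t ^ 2)

/-- The minimum (`s = 1`) and maximum (`s = -1`) of `poissonDensity t`, with the sign `s` encoded
as in `kappaPM`. -/
def poissonExtremum (t s : ℝ) : ℝ := (1 - t ^ 2) / (1 + s * |t|) ^ 2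

lemma poissonExtremum_one_pos {t : ℝ} (ht : t ∈ Ioo (-1 : ℝ) 1) : 0 < poissonExtremum t 1 := by
  have : 0 < 1 - t ^ 2 := by nlinarith [ht.1, ht.2]
  unfold poissonExtremum
  positivity

lemma sq_one_sub_abs_le_poisson_denom (t x : ℝ) :
    (1 + -1 * |t|) ^ 2 ≤ 1 - 2 * t * cos x + t ^ 2 := by
  have h : t * cos x ≤ |t| := (le_abs_self _).trans <| by
    rw [abs_mul]
    exact mul_le_of_le_one_right (abs_nonneg t) (abs_cos_le_one x)
  linarith [sq_abs t]

lemma poisson_denom_le_sq_one_add_abs (t x : ℝ) :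
    1 - 2 * t * cos x + t ^ 2 ≤ (1 + 1 * |t|) ^ 2 := by
  have h : -(t * cos x) ≤ |t| := (neg_le_abs _).trans <| by
    rw [abs_mul]
    exact mul_le_of_le_one_right (abs_nonneg t) (abs_cos_le_one x)
  linarith [sq_abs t]

variable {t : ℝ} (ht : t ∈ Ioo (-1 : ℝ) 1)
include ht

lemma poisson_denom_pos (x : ℝ) : 0 < 1 - 2 * t * cos x + t ^ 2 := by
  have : 0 < 1 + -1 * |t| := by linarith [abs_lt.2 ht]
  exact (pow_pos this 2).trans_le (sq_one_sub_abs_le_poisson_denom t x)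

lemma poissonDensity_mem_Icc (x : ℝ) :
    poissonDensity t x ∈ Icc (poissonExtremum t 1) (poissonExtremum t (-1)) := by
  have hnum : 0 ≤ 1 - t ^ 2 := by nlinarith [ht.1, ht.2]
  have hmin : 0 < (1 + -1 * |t|) ^ 2 := pow_pos (by linarith [abs_lt.2 ht]) 2
  exact ⟨div_le_div_of_nonneg_left hnum (poisson_denom_pos ht x)
      (poisson_denom_le_sq_one_add_abs t x),
    div_le_div_of_nonneg_left hnum hmin (sq_one_sub_abs_le_poisson_denom t x)⟩

lemma hasDerivAt_add_two_mul_arctan (x : ℝ) :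
    HasDerivAt (fun x ↦ x + 2 * arctan (t * sin x / (1 - t * cos x))) (poissonDensity t x) x := by
  have hden : 0 < 1 - t * cos x := by nlinarith [poisson_denom_pos ht x, ht.1, ht.2]
  have hden₂ := poisson_denom_pos ht x
  have hsq := sin_sq_add_cos_sq x
  have harctan := ((((hasDerivAt_sin x).const_mul t).fun_div
    (((hasDerivAt_cos x).const_mul t).const_sub 1) hden.ne').arctan.const_mul 2)
  refine ((hasDerivAt_id x).add harctan).congr_deriv ?_
  have hsec : 1 + (t * sin x / (1 - t * cos x)) ^ 2
      = (1 - 2 * t * cos x + t ^ 2) / (1 - t * cos x) ^ 2 := by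
    field_simp
    linear_combination t ^ 2 * hsq
  rw [hsec, poissonDensity]
  field_simp
  linear_combination -2 * t ^ 2 * hsq

lemma mvfun_eq_add_two_mul_arctan (x : ℝ) :
    mvfun t x = x + 2 * arctan (t * sin x / (1 - t * cos x)) := by
  have hcont : Continuous (poissonDensity t) :=
    continuous_const.div (by fun_prop) fun y ↦ (poisson_denom_pos ht y).ne'
  have hintegral : mvfun t x = ∫ y in (0 : ℝ)..x, poissonDensity t y := by
    simp only [mvfun, poissonDensity, ← intervalIntegral.integral_const_mul, mul_one_div]
  rw [hintegral, intervalIntegral.integral_eq_sub_of_hasDerivAt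
    (fun y _ ↦ hasDerivAt_add_two_mul_arctan ht y) (hcont.intervalIntegrable 0 x)]
  simp

lemma hasDerivAt_mvfun (x : ℝ) : HasDerivAt (mvfun t) (poissonDensity t x) x := by
  rw [funext (mvfun_eq_add_two_mul_arctan ht)]
  exact hasDerivAt_add_two_mul_arctan ht x

lemma differentiable_mvfun : Differentiable ℝ (mvfun t) :=
  fun x ↦ (hasDerivAt_mvfun ht x).differentiableAt

lemma mvfun_neg (x : ℝ) : mvfun t (-x) = -mvfun t x := by
  simp only [mvfun_eq_add_two_mul_arctan ht, sin_neg, cos_neg, mul_neg, neg_div, arctan_neg]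
  ring

lemma mvfun_sub_two_pi (x : ℝ) : mvfun t (x - 2 * π) = mvfun t x - 2 * π := by
  simp only [mvfun_eq_add_two_mul_arctan ht, sin_sub_two_pi, cos_sub_two_pi]
  ring

lemma mvfun_two_pi : mvfun t (2 * π) = 2 * π := by
  simp [mvfun_eq_add_two_mul_arctan ht]

lemma dslope_mvfun_mem_Icc (x y : ℝ) :
    dslope (mvfun t) x y ∈ Icc (poissonExtremum t 1) (poissonExtremum t (-1)) := by
  obtain ⟨z, hz⟩ := exists_deriv_eq_dslope (differentiable_mvfun ht) x y
  rw [← hz, (hasDerivAt_mvfun ht z).deriv]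
  exact poissonDensity_mem_Icc ht z

lemma monotone_mvfun : Monotone (mvfun t) :=
  monotone_of_deriv_nonneg (differentiable_mvfun ht) fun x ↦ by
    rw [(hasDerivAt_mvfun ht x).deriv]
    exact (poissonExtremum_one_pos ht).le.trans (poissonDensity_mem_Icc ht x).1

end Calculus

section Reflection

variable {V : Type*} [NormedAddCommGroup V] [InnerProductSpace ℝ V]

/-- The orthogonal reflection `s_β` in the hyperplane perpendicular to `β`. -/
abbrev rootReflection (β : V) : V ≃ₗᵢ[ℝ] V := (ℝ ∙ β)ᗮ.reflection

lemma rootReflection_apply (β x : V) : rootReflection β x = x - ⟪x, coroot β⟫ • β := by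
  rw [rootReflection, Submodule.reflection_orthogonal_apply, Submodule.reflection_singleton_apply,
    coroot, inner_smul_right, real_inner_self_eq_norm_sq, real_inner_comm β x]
  simp only [RCLike.ofReal_real_eq_id, id_eq, neg_sub, two_smul, ← add_smul]
  congr 2
  ring

lemma rootReflection_self (β : V) : rootReflection β β = -β :=
  Submodule.reflection_orthogonalComplement_singleton_eq_neg β

lemma inner_rootReflection_left (β x y : V) :
    ⟪rootReflection β x, y⟫ = ⟪x, rootReflection β y⟫ := by
  rw [← (rootReflection β).inner_map_map, Submodule.reflection_reflection]

lemma inner_coroot_left (α x : V) : ⟪coroot α, x⟫ = 2 / ⟪α, α⟫ * ⟪α, x⟫ :=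
  real_inner_smul_left _ _ _

lemma inner_coroot_right (x α : V) : ⟪x, coroot α⟫ = 2 / ⟪α, α⟫ * ⟪x, α⟫ :=
  real_inner_smul_right _ _ _

lemma inner_coroot_self {α : V} (hα : α ≠ 0) : ⟪coroot α, α⟫ = 2 := by
  rw [inner_coroot_left, div_mul_cancel₀ _ (inner_self_ne_zero.2 hα)]

lemma coroot_neg (α : V) : coroot (-α) = -coroot α := by
  simp only [coroot, inner_neg_neg, smul_neg]

lemma coroot_map (e : V ≃ₗᵢ[ℝ] V) (α : V) : coroot (e α) = e (coroot α) := by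
  simp only [coroot, e.inner_map_map, map_smul]

lemma inner_coroot_mul_inner_coroot_nonneg (α β : V) : 0 ≤ ⟪α, coroot β⟫ * ⟪coroot α, β⟫ := by
  have h : ⟪α, coroot β⟫ * ⟪coroot α, β⟫ = 2 / ⟪β, β⟫ * (2 / ⟪α, α⟫) * ⟪α, β⟫ ^ 2 := by
    rw [inner_coroot_left, inner_coroot_right]
    ring
  have := real_inner_self_nonneg (x := α)
  have := real_inner_self_nonneg (x := β)
  rw [h]
  positivity

lemma exists_apply_eq_smul_of_commute_rootReflection {A : V →ₗ[ℝ] V} {β : V}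
    (hA : ∀ x, A (rootReflection β x) = rootReflection β (A x)) : ∃ a : ℝ, A β = a • β := by
  have h := hA β
  rw [rootReflection_self, map_neg, rootReflection_apply] at h
  refine ⟨2⁻¹ * ⟪A β, coroot β⟫, ?_⟩
  linear_combination (norm := module) (-(2⁻¹ : ℝ)) • h

end Reflection

namespace RootSystemData

variable {V : Type*} [NormedAddCommGroup V] [InnerProductSpace ℝ V] (D : RootSystemData V)

section Sums

variable {D}

lemma inner_self_pos {α : V} (hα : α ∈ D.R0) : 0 < ⟪α, α⟫ :=
  real_inner_self_pos.2 (D.ne_zero α hα)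

lemma rootReflection_mem {α β : V} (hα : α ∈ D.R0) (hβ : β ∈ D.R0) :
    rootReflection β α ∈ D.R0 := by
  rw [rootReflection_apply]
  exact D.reflect_mem β hβ α hα

lemma neg_mem {α : V} (hα : α ∈ D.R0) : -α ∈ D.R0 := by
  rw [← rootReflection_self]
  exact rootReflection_mem hα hα

variable (D)

lemma sum_R0_comp_rootReflection {M : Type*} [AddCommMonoid M] {β : V} (hβ : β ∈ D.R0)
    (F : V → M) : ∑ α ∈ D.R0, F (rootReflection β α) = ∑ α ∈ D.R0, F α :=
  Finset.sum_nbij' (rootReflection β) (rootReflection β)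
    (fun _ hα ↦ rootReflection_mem hα hβ) (fun _ hα ↦ rootReflection_mem hα hβ)
    (fun α _ ↦ Submodule.reflection_reflection _ α)
    (fun α _ ↦ Submodule.reflection_reflection _ α) fun _ _ ↦ rfl

lemma sum_R0_eq_sum_pos {M : Type*} [AddCommMonoid M] (F : V → M) :
    ∑ α ∈ D.R0, F α = ∑ α ∈ D.pos, (F α + F (-α)) := by
  have hR0 : D.R0 = D.pos ∪ D.pos.image Neg.neg := by
    ext α
    simp only [Finset.mem_union, Finset.mem_image]
    constructor
    · exact fun hα ↦ (D.pos_or_neg α hα).imp_right fun h ↦ ⟨-α, h, neg_neg α⟩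
    · rintro (hα | ⟨γ, hγ, rfl⟩)
      · exact D.pos_subset hα
      · exact neg_mem (D.pos_subset hγ)
  have hdisj : Disjoint D.pos (D.pos.image Neg.neg) := by
    rw [Finset.disjoint_right]
    rintro _ hα
    obtain ⟨γ, hγ, rfl⟩ := Finset.mem_image.1 hα
    exact D.pos_not_both γ hγ
  rw [hR0, Finset.sum_union hdisj, Finset.sum_image neg_injective.injOn, Finset.sum_add_distrib]

lemma inner_sum_pos_smul_coroot {F : V → ℝ} (hF : ∀ α ∈ D.R0, F (-α) = -F α) {β : V}
    (hβ : β ∈ D.R0) :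
    ⟪∑ α ∈ D.pos, F α • coroot α, β⟫ =
      4⁻¹ * ∑ α ∈ D.R0, (F α - F (rootReflection β α)) * ⟪coroot α, β⟫ := by
  have hpos : ∑ α ∈ D.R0, F α * ⟪coroot α, β⟫ = 2 * ⟪∑ α ∈ D.pos, F α • coroot α, β⟫ := by
    rw [D.sum_R0_eq_sum_pos, sum_inner, Finset.mul_sum]
    refine Finset.sum_congr rfl fun α hα ↦ ?_
    rw [hF α (D.pos_subset hα), coroot_neg, inner_neg_left, real_inner_smul_left]
    ring
  have hrefl : ∑ α ∈ D.R0, F (rootReflection β α) * ⟪coroot α, β⟫ =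
      -∑ α ∈ D.R0, F α * ⟪coroot α, β⟫ := by
    rw [← D.sum_R0_comp_rootReflection hβ fun α ↦ F α * ⟪coroot α, β⟫, ← Finset.sum_neg_distrib]
    refine Finset.sum_congr rfl fun α _ ↦ ?_
    rw [coroot_map, inner_rootReflection_left, rootReflection_self, inner_neg_right, mul_neg,
      neg_neg]
  simp only [sub_mul, Finset.sum_sub_distrib, hrefl, hpos]
  ring

lemma inner_sum_pos_smul_coroot_pos {F : V → ℝ} (hF : ∀ α ∈ D.R0, F (-α) = -F α) {β : V}
    (hβ : β ∈ D.R0) (hFβ : 0 < F β)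
    (hle : ∀ α ∈ D.R0, 0 < ⟪α, β⟫ → F (rootReflection β α) ≤ F α) :
    0 < ⟪∑ α ∈ D.pos, F α • coroot α, β⟫ := by
  rw [D.inner_sum_pos_smul_coroot hF hβ]
  refine mul_pos (by norm_num) (Finset.sum_pos' (fun α hα ↦ ?_) ⟨β, hβ, ?_⟩)
  · have hα' := inner_self_pos hα
    rw [inner_coroot_left, mul_left_comm]
    refine mul_nonneg (by positivity) ?_
    rcases lt_trichotomy ⟪α, β⟫ 0 with hneg | hzero | hpos
    · have h := hle (-α) (neg_mem hα) (by rwa [inner_neg_left, neg_pos])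
      rw [map_neg, hF α hα, hF _ (rootReflection_mem hα hβ), neg_le_neg_iff] at h
      exact mul_nonneg_of_nonpos_of_nonpos (sub_nonpos.2 h) hneg.le
    · rw [hzero, mul_zero]
    · exact mul_nonneg (sub_nonneg.2 (hle α hα hpos)) hpos.le
  · rw [rootReflection_self, hF β hβ, inner_coroot_self (D.ne_zero β hβ)]
    linarith

end Sums

section ReflectionInvariant

/-- A function on the roots is reflection invariant if every root reflection preserves it,
equivalently if it is constant on Weyl-group orbits. -/
def IsReflectionInvariant {X : Type*} (k : V → X) : Prop :=
  ∀ α ∈ D.R0, ∀ β ∈ D.R0, k (rootReflection β α) = k α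

variable {D}

lemma isReflectionInvariant_of_forall_W0 {X : Type*} {k : V → X}
    (hk : ∀ α ∈ D.R0, ∀ β ∈ D.R0, (∃ w ∈ D.W0, w α = β) → k α = k β) :
    D.IsReflectionInvariant k := fun α hα β hβ ↦
  (hk α hα _ (rootReflection_mem hα hβ) ⟨(rootReflection β).toEquiv,
    Subgroup.subset_closure ⟨β, hβ, rootReflection_apply β⟩, rfl⟩).symm

lemma IsReflectionInvariant.comp {X Y : Type*} {k : V → X} (hk : D.IsReflectionInvariant k)
    (f : X → Y) : D.IsReflectionInvariant fun α ↦ f (k α) :=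
  fun α hα β hβ ↦ congrArg f (hk α hα β hβ)

lemma IsReflectionInvariant.neg {X : Type*} {k : V → X} (hk : D.IsReflectionInvariant k) {α : V}
    (hα : α ∈ D.R0) : k (-α) = k α := by
  rw [← rootReflection_self]
  exact hk α hα α hα

end ReflectionInvariant

section Schur

lemma exists_eq_smul_id_of_commute_rootReflection {A : V →ₗ[ℝ] V}
    (hA : ∀ β ∈ D.R0, ∀ x, A (rootReflection β x) = rootReflection β (A x)) :
    ∃ a : ℝ, A = a • LinearMap.id := by
  have hmem := D.pos_subset D.hshort_mem
  obtain ⟨a, ha⟩ := exists_apply_eq_smul_of_commute_rootReflection (hA _ hmem)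
  have horth : ∀ α ∈ D.R0.filter (fun γ ↦ A γ = a • γ), ∀ β ∈ D.R0,
      β ∉ D.R0.filter (fun γ ↦ A γ = a • γ) → ⟪α, β⟫ = 0 := by
    intro α hα β hβ hβa
    obtain ⟨b, hb⟩ := exists_apply_eq_smul_of_commute_rootReflection (hA β hβ)
    have hcomm := hA β hβ α
    rw [rootReflection_apply, map_sub, map_smul, (Finset.mem_filter.1 hα).2, map_smul,
      rootReflection_apply, hb] at hcomm
    have hsmul : (⟪α, coroot β⟫ * (a - b)) • β = 0 := by
      linear_combination (norm := module) hcomm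
    rcases mul_eq_zero.1 ((smul_eq_zero_iff_left (D.ne_zero β hβ)).1 hsmul) with h | h
    · have := inner_self_pos hβ
      rw [inner_coroot_right] at h
      exact (mul_eq_zero.1 h).resolve_left (by positivity)
    · exact absurd (Finset.mem_filter.2 ⟨hβ, by rw [hb, sub_eq_zero.1 h]⟩) hβa
  have hall : D.R0.filter (fun γ ↦ A γ = a • γ) = D.R0 :=
    (D.irreducible _ (Finset.filter_subset _ _) horth).resolve_left
      (Finset.ne_empty_of_mem (Finset.mem_filter.2 ⟨hmem, ha⟩))
  exact ⟨a, LinearMap.ext_on D.span_top fun γ hγ ↦ Finset.filter_eq_self.1 hall γ hγ⟩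

/-- The operator `x ↦ ∑_α k_α ⟨α∨,x⟩ α`, which is a multiple of the identity for
reflection-invariant `k`. -/
def rootOperator (k : V → ℝ) : V →ₗ[ℝ] V :=
  ∑ α ∈ D.R0, k α • (innerₗ V (coroot α)).smulRight α

lemma rootOperator_apply (k : V → ℝ) (x : V) :
    D.rootOperator k x = ∑ α ∈ D.R0, (k α * ⟪coroot α, x⟫) • α := by
  simp [rootOperator, smul_smul]

lemma rootOperator_rootReflection {k : V → ℝ} (hk : D.IsReflectionInvariant k) {β : V}
    (hβ : β ∈ D.R0) (x : V) :
    D.rootOperator k (rootReflection β x) = rootReflection β (D.rootOperator k x) := by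
  rw [rootOperator_apply, rootOperator_apply, map_sum, ← D.sum_R0_comp_rootReflection hβ]
  refine Finset.sum_congr rfl fun α hα ↦ ?_
  rw [hk α hα β hβ, coroot_map, (rootReflection β).inner_map_map, map_smul]

include D in
lemma finiteDimensional : FiniteDimensional ℝ V :=
  Module.finite_of_finrank_pos (D.rank_eq ▸ D.n_pos)

lemma trace_rootOperator (k : V → ℝ) :
    LinearMap.trace ℝ V (D.rootOperator k) = 2 * ∑ α ∈ D.R0, k α := by
  have := D.finiteDimensional
  rw [rootOperator, map_sum, Finset.mul_sum]
  refine Finset.sum_congr rfl fun α hα ↦ ?_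
  rw [map_smul, LinearMap.trace_smulRight, innerₗ_apply_apply, inner_coroot_self (D.ne_zero α hα),
    smul_eq_mul, mul_comm]

lemma rootOperator_eq_smul_id {k : V → ℝ} (hk : D.IsReflectionInvariant k) :
    D.rootOperator k = (4 / D.n * ∑ α ∈ D.pos, k α) • LinearMap.id := by
  have := D.finiteDimensional
  obtain ⟨a, ha⟩ := D.exists_eq_smul_id_of_commute_rootReflection
    fun β hβ ↦ D.rootOperator_rootReflection hk hβ
  have hsum : ∑ α ∈ D.R0, k α = 2 * ∑ α ∈ D.pos, k α := by
    rw [D.sum_R0_eq_sum_pos, Finset.mul_sum]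
    exact Finset.sum_congr rfl fun α hα ↦ by rw [hk.neg (D.pos_subset hα), two_mul]
  have htrace : a * D.n = 4 * ∑ α ∈ D.pos, k α := by
    have h := D.trace_rootOperator k
    rw [ha, map_smul, LinearMap.trace_id, D.rank_eq, smul_eq_mul, hsum] at h
    linarith
  have hn : (D.n : ℝ) ≠ 0 := Nat.cast_ne_zero.2 (Nat.one_le_iff_ne_zero.1 D.n_pos)
  rw [ha, div_mul_eq_mul_div, ← htrace, mul_div_cancel_right₀ a hn]

lemma kappaPM_eq_sum {t : V → ℝ} (ht : D.IsReflectionInvariant t) (s : ℝ) {β : V}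
    (hβ : β ∈ D.R0) :
    D.kappaPM t s =
      4⁻¹ * ∑ α ∈ D.R0, poissonExtremum (t α) s * (⟪α, coroot β⟫ * ⟪coroot α, β⟫) := by
  have h := congrArg (fun A : V →ₗ[ℝ] V ↦ ⟪A β, coroot β⟫)
    (D.rootOperator_eq_smul_id (ht.comp (poissonExtremum · s)))
  simp only [rootOperator_apply, sum_inner, LinearMap.smul_apply, LinearMap.id_apply,
    real_inner_smul_left, real_inner_comm (coroot β) β, inner_coroot_self (D.ne_zero β hβ)] at h
  have hsum : ∑ α ∈ D.R0, poissonExtremum (t α) s * (⟪α, coroot β⟫ * ⟪coroot α, β⟫) =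
      ∑ α ∈ D.R0, poissonExtremum (t α) s * ⟪coroot α, β⟫ * ⟪α, coroot β⟫ :=
    Finset.sum_congr rfl fun _ _ ↦ by ring
  rw [hsum, h]
  simp only [kappaPM, poissonExtremum]
  ring

lemma kappaPM_one_pos {t : V → ℝ} (ht : ∀ α ∈ D.pos, t α ∈ Ioo (-1 : ℝ) 1) :
    0 < D.kappaPM t 1 := by
  have hn : (0 : ℝ) < D.n := Nat.cast_pos.2 D.n_pos
  exact mul_pos (by positivity)
    (Finset.sum_pos (fun α hα ↦ poissonExtremum_one_pos (ht α hα)) ⟨_, D.hshort_mem⟩)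

end Schur

section Rho

lemma exists_linearMap_pos_on_pos : ∃ height : V →ₗ[ℝ] ℝ, ∀ α ∈ D.pos, 0 < height α := by
  have hpos : (D.pos : Set V) ⊆ Submodule.span ℝ (range D.simpleRoot) := by
    intro α hα
    obtain ⟨k, rfl⟩ := D.pos_natCombo α hα
    exact Submodule.sum_mem _ fun j _ ↦
      Submodule.smul_mem _ _ (Submodule.subset_span (mem_range_self j))
  have hspan : ⊤ ≤ Submodule.span ℝ (range D.simpleRoot) := by
    rw [← D.span_top, Submodule.span_le]
    intro α hα
    rcases D.pos_or_neg α hα with h | h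
    · exact hpos h
    · exact neg_neg α ▸ Submodule.neg_mem _ (hpos h)
  let b := basisOfTopLeSpanOfCardEqFinrank D.simpleRoot hspan (by simp [D.rank_eq])
  have hb : ∀ j, b.constr ℝ (fun _ ↦ (1 : ℝ)) (D.simpleRoot j) = 1 := fun j ↦ by
    simpa [b] using b.constr_basis ℝ (fun _ ↦ (1 : ℝ)) j
  refine ⟨b.constr ℝ fun _ ↦ 1, fun α hα ↦ ?_⟩
  obtain ⟨k, hk⟩ := D.pos_natCombo α hα
  have hne : ∃ j, k j ≠ 0 := by
    by_contra! h0
    exact D.ne_zero α (D.pos_subset hα) (by simp [hk, h0])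
  obtain ⟨j, hj⟩ := hne
  simp only [hk, map_sum, map_smul, hb, smul_eq_mul, mul_one]
  exact Finset.sum_pos' (fun i _ ↦ Nat.cast_nonneg _)
    ⟨j, Finset.mem_univ j, Nat.cast_pos.2 (Nat.pos_of_ne_zero hj)⟩

variable {D}

lemma mem_pos_of_rootReflection_mem_pos {α β : V} (hα : α ∈ D.R0) (hβ : β ∈ D.pos)
    (hαβ : 0 < ⟪α, β⟫) (h : rootReflection β α ∈ D.pos) : α ∈ D.pos := by
  obtain ⟨height, hheight⟩ := D.exists_linearMap_pos_on_pos
  refine (D.pos_or_neg α hα).resolve_right fun hneg ↦ ?_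
  have hβ' := inner_self_pos (D.pos_subset hβ)
  have h₁ := hheight _ h
  have h₂ := hheight _ hneg
  have h₃ : 0 < ⟪α, coroot β⟫ * height β := by
    rw [inner_coroot_right]
    have := hheight β hβ
    positivity
  rw [rootReflection_apply, map_sub, map_smul, smul_eq_mul] at h₁
  rw [map_neg] at h₂
  linarith

variable (D)

/-- The function `1` on positive roots and `-1` on negative roots, an odd extension of the
coefficients of `2ρ∨ = ∑_{α > 0} α∨`. -/
def posSign (α : V) : ℝ := if α ∈ D.pos then 1 else -1

variable {D}

lemma posSign_of_mem {α : V} (hα : α ∈ D.pos) : D.posSign α = 1 := if_pos hα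

lemma posSign_of_notMem {α : V} (hα : α ∉ D.pos) : D.posSign α = -1 := if_neg hα

lemma posSign_neg {α : V} (hα : α ∈ D.R0) : D.posSign (-α) = -D.posSign α := by
  by_cases h : α ∈ D.pos
  · rw [posSign_of_mem h, posSign_of_notMem (D.pos_not_both α h)]
  · rw [posSign_of_notMem h, posSign_of_mem ((D.pos_or_neg α hα).resolve_left h), neg_neg]

lemma posSign_rootReflection_le {α β : V} (hα : α ∈ D.R0) (hβ : β ∈ D.pos) (hαβ : 0 < ⟪α, β⟫) :
    D.posSign (rootReflection β α) ≤ D.posSign α := by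
  unfold posSign
  split_ifs with hrefl hpos
  · rfl
  · exact absurd (mem_pos_of_rootReflection_mem_pos hα hβ hαβ hrefl) hpos
  · norm_num
  · rfl

variable (D)

lemma sum_pos_posSign_smul_coroot :
    ∑ α ∈ D.pos, D.posSign α • coroot α = (2 : ℝ) • D.rhoVee := by
  rw [rhoVee, smul_inv_smul₀ two_ne_zero]
  exact Finset.sum_congr rfl fun α hα ↦ by rw [posSign_of_mem hα, one_smul]

lemma inner_rhoVee_pos {β : V} (hβ : β ∈ D.pos) : 0 < ⟪D.rhoVee, β⟫ := by
  have h := D.inner_sum_pos_smul_coroot_pos (fun α ↦ posSign_neg) (D.pos_subset hβ)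
    (by rw [posSign_of_mem hβ]; exact one_pos)
    fun α hα hαβ ↦ posSign_rootReflection_le hα hβ hαβ
  rw [sum_pos_posSign_smul_coroot, real_inner_smul_left] at h
  linarith

end Rho

section Critical

variable {c : ℝ} {t : V → ℝ} {μ ξ : V}

lemma hasFDerivAt_morse (ht : ∀ α ∈ D.pos, t α ∈ Ioo (-1 : ℝ) 1) :
    HasFDerivAt (D.morse c t μ)
      (innerSL ℝ (c • ξ - (2 * π) • (D.rhoVee + μ) +
        ∑ α ∈ D.pos, mvfun (t α) ⟪ξ, α⟫ • coroot α)) ξ := by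
  have hquad : HasFDerivAt (fun ξ : V ↦ c / 2 * ⟪ξ, ξ⟫) (c • innerSL ℝ ξ) ξ := by
    simp only [real_inner_self_eq_norm_sq]
    refine ((hasStrictFDerivAt_norm_sq ξ).hasFDerivAt.const_mul (c / 2)).congr_fderiv ?_
    module
  have hlin (η : V) : HasFDerivAt (fun ξ : V ↦ ⟪η, ξ⟫) (innerSL ℝ η) ξ :=
    (innerSL ℝ η).hasFDerivAt
  have hintegral : ∀ α ∈ D.pos, HasFDerivAt
      (fun ξ ↦ 2 / ⟪α, α⟫ * ∫ x in (0 : ℝ)..⟪ξ, α⟫, mvfun (t α) x)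
      (mvfun (t α) ⟪ξ, α⟫ • innerSL ℝ (coroot α)) ξ := by
    intro α hα
    have hcont : Continuous (mvfun (t α)) := (differentiable_mvfun (ht α hα)).continuous
    simp only [real_inner_comm α]
    refine (((hcont.integral_hasStrictDerivAt 0 _).hasDerivAt.comp_hasFDerivAt ξ
      (hlin α)).const_mul (2 / ⟪α, α⟫)).congr_fderiv ?_
    rw [coroot, map_smul]
    module
  refine ((hquad.fun_sub ((hlin (D.rhoVee + μ)).const_mul (2 * π))).fun_add
    (HasFDerivAt.fun_sum hintegral)).congr_fderiv ?_
  simp only [map_add, map_sub, map_smul, map_sum]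

lemma criticalEq_of_forall_morse_le (ht : ∀ α ∈ D.pos, t α ∈ Ioo (-1 : ℝ) 1)
    (hmin : ∀ ζ, D.morse c t μ ξ ≤ D.morse c t μ ζ) : D.criticalEq c t μ ξ := by
  have hloc : IsLocalMin (D.morse c t μ) ξ := Filter.Eventually.of_forall hmin
  have hzero := hloc.hasFDerivAt_eq_zero (D.hasFDerivAt_morse ht)
  rw [← map_zero (innerSL ℝ), innerSL_inj] at hzero
  rw [criticalEq]
  linear_combination (norm := module) hzero

variable {D}

lemma criticalEq.exists_mul_inner_eq (hξ : D.criticalEq c t μ ξ)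
    (ht : ∀ α ∈ D.R0, t α ∈ Ioo (-1 : ℝ) 1) (hinv : D.IsReflectionInvariant t) {β : V}
    (hβ : β ∈ D.R0) :
    ∃ K ∈ Icc (D.kappaPM t 1) (D.kappaPM t (-1)),
      (c + K) * ⟪ξ, β⟫ = 2 * π * ⟪D.rhoVee + μ, β⟫ := by
  let q (α : V) : ℝ := dslope (mvfun (t α)) ⟪ξ, rootReflection β α⟫ ⟪ξ, α⟫
  have hq : ∀ α ∈ D.R0, q α ∈ Icc (poissonExtremum (t α) 1) (poissonExtremum (t α) (-1)) :=
    fun α hα ↦ dslope_mvfun_mem_Icc (ht α hα) _ _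
  have hdiff : ∀ α ∈ D.R0, mvfun (t α) ⟪ξ, α⟫ -
      mvfun (t (rootReflection β α)) ⟪ξ, rootReflection β α⟫ =
        q α * (⟪α, coroot β⟫ * ⟪ξ, β⟫) := by
    intro α hα
    rw [hinv α hα β hβ, ← sub_smul_dslope (mvfun (t α)), smul_eq_mul, mul_comm]
    congr 1
    rw [rootReflection_apply, inner_sub_right, real_inner_smul_right, sub_sub_cancel]
  have hodd : ∀ α ∈ D.R0, mvfun (t (-α)) ⟪ξ, -α⟫ = -mvfun (t α) ⟪ξ, α⟫ := fun α hα ↦ by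
    rw [hinv.neg hα, inner_neg_right, mvfun_neg (ht α hα)]
  refine ⟨4⁻¹ * ∑ α ∈ D.R0, q α * (⟪α, coroot β⟫ * ⟪coroot α, β⟫), ⟨?_, ?_⟩, ?_⟩
  · rw [D.kappaPM_eq_sum hinv 1 hβ]
    gcongr with α hα
    · exact inner_coroot_mul_inner_coroot_nonneg α β
    · exact (hq α hα).1
  · rw [D.kappaPM_eq_sum hinv (-1) hβ]
    gcongr with α hα
    · exact inner_coroot_mul_inner_coroot_nonneg α β
    · exact (hq α hα).2
  · have hpair := congrArg (⟪·, β⟫) hξ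
    have hsum := D.inner_sum_pos_smul_coroot (F := fun α ↦ mvfun (t α) ⟪ξ, α⟫) hodd hβ
    simp only [inner_add_left, real_inner_smul_left, hsum] at hpair
    rw [inner_add_left, ← hpair, add_mul, mul_assoc, Finset.sum_mul]
    congr 2
    refine Finset.sum_congr rfl fun α hα ↦ ?_
    rw [hdiff α hα]
    ring

lemma criticalEq.inner_pos (hξ : D.criticalEq c t μ ξ)
    (ht : ∀ α ∈ D.R0, t α ∈ Ioo (-1 : ℝ) 1) (hinv : D.IsReflectionInvariant t)
    (hc : 0 < c + D.kappaPM t 1) {β : V} (hβ : β ∈ D.pos) (hμ : 0 ≤ ⟪μ, β⟫) : 0 < ⟪ξ, β⟫ := by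
  obtain ⟨K, hK, hKξ⟩ := hξ.exists_mul_inner_eq ht hinv (D.pos_subset hβ)
  have hρμ : 0 < ⟪D.rhoVee + μ, β⟫ := by
    rw [inner_add_left]
    linarith [D.inner_rhoVee_pos hβ]
  have hmul : 0 < (c + K) * ⟪ξ, β⟫ := by
    rw [hKξ]
    positivity
  exact pos_of_mul_pos_right hmul (by linarith [hK.1])

/-- The odd function `v_α(⟨ξ,α⟩) ∓ π` on the roots, obtained by absorbing the term `2πρ∨` of the
critical equation into the sum over the positive roots. -/
def shiftedVelocity (D : RootSystemData V) (t : V → ℝ) (ξ α : V) : ℝ :=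
  mvfun (t α) ⟪ξ, α⟫ - π * D.posSign α

lemma shiftedVelocity_neg (ht : ∀ α ∈ D.R0, t α ∈ Ioo (-1 : ℝ) 1)
    (hinv : D.IsReflectionInvariant t) {α : V} (hα : α ∈ D.R0) :
    D.shiftedVelocity t ξ (-α) = -D.shiftedVelocity t ξ α := by
  rw [shiftedVelocity, shiftedVelocity, hinv.neg hα, inner_neg_right, mvfun_neg (ht α hα),
    posSign_neg hα]
  ring

lemma criticalEq.sum_pos_shiftedVelocity_smul_coroot (hξ : D.criticalEq c t μ ξ) :
    ∑ α ∈ D.pos, D.shiftedVelocity t ξ α • coroot α = (2 * π) • μ - c • ξ := by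
  simp only [shiftedVelocity, sub_smul, mul_smul, Finset.sum_sub_distrib, ← Finset.smul_sum,
    sum_pos_posSign_smul_coroot]
  rw [criticalEq] at hξ
  linear_combination (norm := module) hξ

lemma one_le_inner_coroot {α β : V} (hα : α ∈ D.R0) (hβ : β ∈ D.R0) (hαβ : 0 < ⟪α, β⟫) :
    1 ≤ ⟪α, coroot β⟫ := by
  obtain ⟨k, hk⟩ := D.crystallographic β hβ α hα
  have hpos : 0 < ⟪α, coroot β⟫ := by
    have := inner_self_pos hβ
    rw [inner_coroot_right]
    positivity
  rw [hk] at hpos ⊢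
  exact_mod_cast hpos

lemma shiftedVelocity_rootReflection_le (ht : ∀ α ∈ D.R0, t α ∈ Ioo (-1 : ℝ) 1)
    (hinv : D.IsReflectionInvariant t) (hpos : ∀ α ∈ D.pos, 0 < ⟪ξ, α⟫) {α β : V}
    (hα : α ∈ D.R0) (hβ : β ∈ D.R0) (hαβ : 0 < ⟪α, β⟫) (hle : ⟪ξ, α⟫ ≤ ⟪ξ, β⟫)
    (hpi : 2 * π ≤ ⟪ξ, β⟫) :
    D.shiftedVelocity t ξ (rootReflection β α) ≤ D.shiftedVelocity t ξ α := by
  have hξβ : 0 < ⟪ξ, β⟫ := two_pi_pos.trans_le hpi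
  have hdrop : ⟪ξ, rootReflection β α⟫ ≤ ⟪ξ, α⟫ - ⟪ξ, β⟫ := by
    rw [rootReflection_apply, inner_sub_right, real_inner_smul_right]
    gcongr
    exact le_mul_of_one_le_left (by linarith) (one_le_inner_coroot hα hβ hαβ)
  have hrefl : rootReflection β α ∉ D.pos := fun h ↦ by linarith [hpos _ h]
  rw [shiftedVelocity, shiftedVelocity, hinv α hα β hβ, posSign_of_notMem hrefl]
  by_cases hαpos : α ∈ D.pos
  · have hmono := monotone_mvfun (ht α hα)
      (show ⟪ξ, rootReflection β α⟫ ≤ ⟪ξ, α⟫ - 2 * π by linarith)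
    rw [mvfun_sub_two_pi (ht α hα)] at hmono
    rw [posSign_of_mem hαpos]
    linarith
  · have hmono := monotone_mvfun (ht α hα)
      (show ⟪ξ, rootReflection β α⟫ ≤ ⟪ξ, α⟫ by linarith)
    rw [posSign_of_notMem hαpos]
    linarith

lemma criticalEq.inner_lt_two_pi (hξ : D.criticalEq c t μ ξ)
    (ht : ∀ α ∈ D.R0, t α ∈ Ioo (-1 : ℝ) 1) (hinv : D.IsReflectionInvariant t) (hc : 0 ≤ c)
    (hμ : ∀ α ∈ D.pos, ⟪μ, α⟫ ≤ c) (hpos : ∀ α ∈ D.pos, 0 < ⟪ξ, α⟫) {α : V} (hα : α ∈ D.pos) :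
    ⟪ξ, α⟫ < 2 * π := by
  obtain ⟨β, hβ, hmax⟩ := D.pos.exists_max_image (⟪ξ, ·⟫) ⟨α, hα⟩
  refine (hmax α hα).trans_lt ?_
  by_contra! hpi
  have hβR := D.pos_subset hβ
  have hmaxR : ∀ γ ∈ D.R0, ⟪ξ, γ⟫ ≤ ⟪ξ, β⟫ := fun γ hγ ↦ by
    rcases D.pos_or_neg γ hγ with h | h
    · exact hmax γ h
    · have := hpos _ h
      rw [inner_neg_right] at this
      linarith [hpos β hβ]
  have hβpos : 0 < D.shiftedVelocity t ξ β := by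
    have hmono := monotone_mvfun (ht β hβR) hpi
    rw [mvfun_two_pi (ht β hβR)] at hmono
    rw [shiftedVelocity, posSign_of_mem hβ]
    linarith [pi_pos]
  have hsum := D.inner_sum_pos_smul_coroot_pos (fun _ ↦ shiftedVelocity_neg ht hinv) hβR hβpos
    fun γ hγ hγβ ↦ shiftedVelocity_rootReflection_le ht hinv hpos hγ hβR hγβ (hmaxR γ hγ) hpi
  rw [hξ.sum_pos_shiftedVelocity_smul_coroot, inner_sub_left, real_inner_smul_left,
    real_inner_smul_left] at hsum
  have hlower : 2 * π * c ≤ c * ⟪ξ, β⟫ := by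
    rw [mul_comm]
    gcongr
  have hupper : 2 * π * ⟪μ, β⟫ ≤ 2 * π * c := by
    gcongr
    exact hμ β hβ
  linarith

end Critical

end RootSystemData

open RootSystemData in
theorem statement13_general {V : Type*} [NormedAddCommGroup V] [InnerProductSpace ℝ V]
    (D : RootSystemData V) (c : ℝ)
    (t : V → ℝ) (ht : ∀ α ∈ D.R0, t α ∈ Set.Ioo (-1 : ℝ) 1)
    (htinv : ∀ α ∈ D.R0, ∀ β ∈ D.R0, (∃ w ∈ D.W0, w α = β) → t α = t β)
    (μ : V) (hμdom : ∀ α ∈ D.pos, 0 ≤ ⟪μ, α⟫ ∧ ⟪μ, α⟫ ≤ c)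
    (ξ : V) (hξ : D.criticalEq c t μ ξ) :
    (∀ α ∈ D.pos, 0 < ⟪ξ, α⟫ ∧ ⟪ξ, α⟫ < 2 * Real.pi) ∧
    (∀ α ∈ D.pos,
      2 * Real.pi * ⟪D.rhoVee + μ, α⟫ / (c + D.kappaPM t (-1)) ≤ ⟪ξ, α⟫ ∧
      ⟪ξ, α⟫ ≤ 2 * Real.pi * ⟪D.rhoVee + μ, α⟫ / (c + D.kappaPM t 1)) := by
  have hinv := isReflectionInvariant_of_forall_W0 htinv
  have hc : 0 ≤ c := (hμdom _ D.hshort_mem).1.trans (hμdom _ D.hshort_mem).2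
  have hκ : 0 < c + D.kappaPM t 1 :=
    add_pos_of_nonneg_of_pos hc (D.kappaPM_one_pos fun α hα ↦ ht α (D.pos_subset hα))
  have hpos : ∀ α ∈ D.pos, 0 < ⟪ξ, α⟫ := fun α hα ↦
    hξ.inner_pos ht hinv hκ hα (hμdom α hα).1
  refine ⟨fun α hα ↦ ⟨hpos α hα,
    hξ.inner_lt_two_pi ht hinv hc (fun γ hγ ↦ (hμdom γ hγ).2) hpos hα⟩, fun α hα ↦ ?_⟩
  obtain ⟨K, ⟨hK₁, hK₂⟩, hK⟩ := hξ.exists_mul_inner_eq ht hinv (D.pos_subset hα)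
  have hα₀ := (hpos α hα).le
  rw [← hK, div_le_iff₀' (by linarith), le_div_iff₀' hκ]
  constructor <;> gcongr

open RootSystemData in
/-- for `μ ∈ P_c^{∨,+}`, the global minimum `ξ_μ` of `𝒱_μ` lies in the
open alcove `2πA∨` and satisfies the moment-gap inequalities
`2π⟨ρ∨+μ,α⟩/(c+κ₋) ≤ ⟨ξ_μ,α⟩ ≤ 2π⟨ρ∨+μ,α⟩/(c+κ₊)` for every positive root `α`. -/
theorem statement13 {V : Type*} [NormedAddCommGroup V] [InnerProductSpace ℝ V]
    (D : RootSystemData V) (c : ℝ) (hc : 0 < c)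
    (t : V → ℝ) (ht : ∀ α ∈ D.R0, t α ∈ Set.Ioo (-1 : ℝ) 1)
    (htinv : ∀ α ∈ D.R0, ∀ β ∈ D.R0, (∃ w ∈ D.W0, w α = β) → t α = t β)
    (μ : V) (hμ : μ ∈ D.coweightLattice)
    (hμdom : ∀ α ∈ D.pos, 0 ≤ ⟪μ, α⟫ ∧ ⟪μ, α⟫ ≤ c)
    (ξμ : V) (hmin : ∀ ζ : V, D.morse c t μ ξμ ≤ D.morse c t μ ζ)
    (huniq : ∀ ξ' : V, (∀ ζ : V, D.morse c t μ ξ' ≤ D.morse c t μ ζ) → ξ' = ξμ) :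
    (∀ α ∈ D.pos, 0 < ⟪ξμ, α⟫ ∧ ⟪ξμ, α⟫ < 2 * Real.pi) ∧
    (∀ α ∈ D.pos,
      2 * Real.pi * ⟪D.rhoVee + μ, α⟫ / (c + D.kappaPM t (-1)) ≤ ⟪ξμ, α⟫ ∧
      ⟪ξμ, α⟫ ≤ 2 * Real.pi * ⟪D.rhoVee + μ, α⟫ / (c + D.kappaPM t 1)) :=
  statement13_general D c t ht htinv μ hμdom ξμ
    (D.criticalEq_of_forall_morse_le (fun α hα ↦ ht α (D.pos_subset hα)) hmin)
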